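/- arXiv:1809.01734 — 6 statements merged into one kernel-verified Lean document; each statement's English description precedes it below -/
import Mathlib

section
/- Let C be a category with finite limits that is locally cartesian closed, and let p : E ⟶ B be a morphism. Then the following are equivalent: (1) p is an isomorphism (equivalently, p is a terminal object of the slice category C/B); (2) the structure morphism isContr_B(E) ⟶ B is an isomorphism; (3) the structure morphism isContr_B(E) ⟶ B admits a section, i.e. there exists a morphism from the terminal object id_B of C/B to isContr_B(E) in C/B. -/
open CategoryTheory Limits

/-- The internal object of contractibility `isContr_B(E) := p_! ((π₂)_* (Δ_p))` of a morphism
`p : E ⟶ B`, defined in a finitely complete category equipped with pushforward functors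
(right adjoints to base change). -/
noncomputable def isContrObj {C : Type*} [Category C] [HasFiniteLimits C]
    (pushforward : ∀ {X Y : C} (f : X ⟶ Y), Over X ⥤ Over Y)
    {E B : C} (p : E ⟶ B) : Over B :=
  (Over.map p).obj ((pushforward (pullback.snd p p)).obj (Over.mk (pullback.diagonal p)))

/-- In a locally cartesian closed category with finite limits, for a morphism `p : E ⟶ B`
the following are equivalent: `p` is an isomorphism (i.e. a terminal object of `C/B`);
the structure morphism `isContr_B(E) ⟶ B` is an isomorphism; the structure morphism
`isContr_B(E) ⟶ B` admits a section, i.e. there is a morphism `id_B ⟶ isContr_B(E)`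
in `C/B`. -/
theorem isContr_characterizes_contractibility
    {C : Type*} [Category C] [HasFiniteLimits C]
    (pushforward : ∀ {X Y : C} (f : X ⟶ Y), Over X ⥤ Over Y)
    (adj : ∀ {X Y : C} (f : X ⟶ Y), Over.pullback f ⊣ pushforward f)
    {E B : C} (p : E ⟶ B) :
    (IsIso p ↔ IsIso (isContrObj pushforward p).hom) ∧
    (IsIso (isContrObj pushforward p).hom ↔
      Nonempty (Over.mk (𝟙 B) ⟶ isContrObj pushforward p)) := by
  have h12 : IsIso p → IsIso (isContrObj pushforward p).hom := by
    intro hp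
    have hd : IsIso (pullback.diagonal p) := inferInstance
    let i : Over.mk (pullback.diagonal p) ≅ Over.mk (𝟙 _) :=
      Over.isoMk (asIso (pullback.diagonal p)) (by simp)
    have ht : IsTerminal (Over.mk (pullback.diagonal p)) :=
      Over.mkIdTerminal.ofIso i.symm
    have := (adj (pullback.snd p p)).rightAdjoint_preservesLimits
    have hQ := IsTerminal.isTerminalObj (pushforward (pullback.snd p p)) _ ht
    let j := hQ.uniqueUpToIso (Over.mkIdTerminal (X := E))
    have hj : IsIso j.hom.left := ((Over.forget E).mapIso j).isIso_hom
    have hw := Over.w j.hom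
    have hQi : IsIso ((pushforward (pullback.snd p p)).obj
        (Over.mk (pullback.diagonal p))).hom := by
      rw [← hw]
      exact IsIso.comp_isIso' hj (inferInstanceAs (IsIso (𝟙 E)))
    exact IsIso.comp_isIso' hQi hp
  have h23 : IsIso (isContrObj pushforward p).hom →
      Nonempty (Over.mk (𝟙 B) ⟶ isContrObj pushforward p) := by
    intro h
    exact ⟨Over.homMk (inv (isContrObj pushforward p).hom) (IsIso.inv_hom_id _)⟩
  have h31 : Nonempty (Over.mk (𝟙 B) ⟶ isContrObj pushforward p) → IsIso p := by
    rintro ⟨s⟩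
    obtain ⟨e, he, φl, hφ⟩ : ∃ (e : B ⟶ E) (_ : e ≫ p = 𝟙 B)
        (φl : pullback e (pullback.snd p p) ⟶ E),
        φl ≫ pullback.diagonal p = pullback.snd e (pullback.snd p p) := by
      let Q := (pushforward (pullback.snd p p)).obj (Over.mk (pullback.diagonal p))
      let sl : B ⟶ Q.left := s.left
      have hs : sl ≫ Q.hom ≫ p = 𝟙 B := Over.w s
      let t : Over.mk (sl ≫ Q.hom) ⟶ Q := Over.homMk sl rfl
      let φ := ((adj (pullback.snd p p)).homEquiv _ _).symm t
      exact ⟨sl ≫ Q.hom, (Category.assoc _ _ _).trans hs, φ.left, Over.w φ⟩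
    have h1 : φl = pullback.snd e (pullback.snd p p) ≫ pullback.fst p p := by
      rw [← hφ]; simp
    have h2 : φl = pullback.snd e (pullback.snd p p) ≫ pullback.snd p p := by
      rw [← hφ]; simp
    have hm : 𝟙 E ≫ p = (p ≫ e) ≫ p := by simp [he]
    have hl : p ≫ e = pullback.lift (𝟙 E) (p ≫ e) hm ≫ pullback.snd p p :=
      (pullback.lift_snd _ _ _).symm
    have h3 : pullback.lift p (pullback.lift (𝟙 E) (p ≫ e) hm) hl ≫ φl = 𝟙 E := by
      rw [h1, pullback.lift_snd_assoc, pullback.lift_fst]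
    have h4 : pullback.lift p (pullback.lift (𝟙 E) (p ≫ e) hm) hl ≫ φl = p ≫ e := by
      rw [h2, pullback.lift_snd_assoc, pullback.lift_snd]
    exact ⟨e, h4.symm.trans h3, he⟩
  exact ⟨⟨h12, fun h => h31 (h23 h)⟩, ⟨h23, fun h => h12 (h31 h)⟩⟩
end

section
/- Let C be a category with finite limits that is locally cartesian closed, and let p : E ⟶ B be a morphism. Then the structure morphism isContr_B(E) ⟶ B is a monomorphism; equivalently, isContr_B(E) is a subterminal object of the slice category C/B. -/
open CategoryTheory Limits

/-- In a locally cartesian closed category with finite limits, the structure morphism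
`isContr_B(E) ⟶ B` is a monomorphism, i.e. `isContr_B(E)` is a subterminal object of the
slice category `C/B`. -/
theorem isContr_hom_mono
    {C : Type*} [Category C] [HasFiniteLimits C]
    (pushforward : ∀ {X Y : C} (f : X ⟶ Y), Over X ⥤ Over Y)
    (adj : ∀ {X Y : C} (f : X ⟶ Y), Over.pullback f ⊣ pushforward f)
    {E B : C} (p : E ⟶ B) :
    Mono (isContrObj pushforward p).hom := by
  have key : ∀ {T : C} (u v : T ⟶ ((pushforward (pullback.snd p p)).obj
      (Over.mk (pullback.diagonal p))).left),
      (u ≫ ((pushforward (pullback.snd p p)).obj (Over.mk (pullback.diagonal p))).hom) ≫ p =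
      (v ≫ ((pushforward (pullback.snd p p)).obj (Over.mk (pullback.diagonal p))).hom) ≫ p →
      u = v := by
    intro T u v h
    generalize hP : (pushforward (pullback.snd p p)).obj (Over.mk (pullback.diagonal p)) = P
      at u v h
    have hxy : v ≫ P.hom = u ≫ P.hom := by
      subst hP
      let k := ((adj (pullback.snd p p)).homEquiv (Over.mk (u ≫ _)) _).symm
        (Over.homMk u rfl)
      have hk : k.left ≫ pullback.diagonal p = pullback.snd _ _ := Over.w k
      have hs := congrArg (fun m => pullback.lift (𝟙 T) (pullback.lift (v ≫ _) (u ≫ _) h.symm)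
        ((Category.id_comp _).trans (pullback.lift_snd _ _ _).symm) ≫ m) hk
      have h1 := congrArg (fun m => m ≫ pullback.fst p p) (hs.trans (pullback.lift_snd _ _ _))
      have h2 := congrArg (fun m => m ≫ pullback.snd p p) (hs.trans (pullback.lift_snd _ _ _))
      simp only [Category.assoc, pullback.diagonal_fst, pullback.diagonal_snd,
        pullback.lift_snd, pullback.lift_fst, pullback.lift_snd_assoc] at h1 h2
      exact h1.symm.trans h2
    subst hP
    let a : Over.mk (u ≫ _) ⟶ (pushforward (pullback.snd p p)).obj
      (Over.mk (pullback.diagonal p)) := Over.homMk u rfl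
    let b : Over.mk (u ≫ _) ⟶ (pushforward (pullback.snd p p)).obj
      (Over.mk (pullback.diagonal p)) := Over.homMk v hxy
    have hab : a = b := by
      apply ((adj (pullback.snd p p)).homEquiv _ _).symm.injective
      ext
      rw [← cancel_mono (pullback.diagonal p)]
      exact (Over.w (((adj (pullback.snd p p)).homEquiv _ _).symm a)).trans
        (Over.w (((adj (pullback.snd p p)).homEquiv _ _).symm b)).symm
    exact congrArg (fun m => m.left) hab
  constructor
  intro T u v h
  refine key u v ?_
  exact (Category.assoc _ _ _).trans (Eq.trans (by simpa [isContrObj] using h) (Category.assoc _ _ _).symm)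
end

section
/- Let C be a category with finite limits that is locally cartesian closed, let p : E ⟶ B be a morphism, and let g : A ⟶ B be any morphism. Then there is an isomorphism g^*(isContr_B(E)) ≅ isContr_A(A ×_B E) in the slice category C/A, where A ×_B E ⟶ A denotes the base change of p along g. In other words, the formation of the internal object of contractibility is stable under base change. -/
open CategoryTheory Limits

/-- Beck-Chevalley for left adjoints. -/
noncomputable def bcLeft {C : Type*} [Category C] [HasFiniteLimits C]
    {E' E A B : C} {g' : E' ⟶ E} {p' : E' ⟶ A} {p : E ⟶ B} {g : A ⟶ B}
    (h : IsPullback p' g' g p) :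
    Over.pullback p' ⋙ Over.map g' ≅ Over.map g ⋙ Over.pullback p :=
  NatIso.ofComponents
    (fun Y => Over.isoMk
      (((IsPullback.of_hasPullback Y.hom p').flip.paste_horiz h.flip).flip.isoPullback)
      (by simp))
    (by
      intro X Y f
      ext
      apply pullback.hom_ext
      · simp
        erw [pullback.lift_fst, pullback.lift_fst, IsPullback.isoPullback_hom_fst_assoc]
      · simp
        erw [pullback.lift_snd_assoc, pullback.lift_snd, IsPullback.isoPullback_hom_snd])

/-- In a locally cartesian closed category with finite limits, the formation of the internal
object of contractibility is stable under base change: for `p : E ⟶ B` and `g : A ⟶ B`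
there is an isomorphism `g^*(isContr_B(E)) ≅ isContr_A(A ×_B E)` in `C/A`, where
`A ×_B E ⟶ A` is the base change `pullback.fst g p` of `p` along `g`. -/
theorem isContr_baseChange_stable
    {C : Type*} [Category C] [HasFiniteLimits C]
    (pushforward : ∀ {X Y : C} (f : X ⟶ Y), Over X ⥤ Over Y)
    (adj : ∀ {X Y : C} (f : X ⟶ Y), Over.pullback f ⊣ pushforward f)
    {E B A : C} (p : E ⟶ B) (g : A ⟶ B) :
    Nonempty ((Over.pullback g).obj (isContrObj pushforward p) ≅
      isContrObj pushforward (pullback.fst g p)) := by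
  have h : IsPullback (pullback.fst g p) (pullback.snd g p) g p := IsPullback.of_hasPullback g p
  unfold isContrObj
  generalize pullback.fst g p = p' at *
  generalize pullback.snd g p = g' at *
  generalize pullback g p = E' at *
  let k : pullback p' p' ⟶ pullback p p := pullback.map p' p' p p g' g' g h.w h.w
  -- the square on second projections
  have k1 : k ≫ pullback.fst p p = pullback.fst p' p' ≫ g' := pullback.lift_fst _ _ _
  have k2 : k ≫ pullback.snd p p = pullback.snd p' p' ≫ g' := pullback.lift_snd _ _ _
  have h2 : IsPullback (pullback.snd p' p') k g' (pullback.snd p p) := by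
    have big := (IsPullback.of_hasPullback p' p').paste_horiz h.flip
    rw [h.w, ← k1] at big
    exact (IsPullback.of_right big k2 (IsPullback.of_hasPullback p p)).flip
  have h3 : IsPullback (pullback.diagonal p') g' k (pullback.diagonal p) := by
    refine IsPullback.of_right (h₁₂ := pullback.snd p' p') (h₂₂ := pullback.snd p p) (v₁₃ := g')
      ?_ ?_ h2
    · rw [pullback.diagonal_snd, pullback.diagonal_snd]
      exact IsPullback.of_horiz_isIso ⟨by simp⟩
    · apply pullback.hom_ext <;> simp [k1, k2]
  let R : pushforward (pullback.snd p p) ⋙ Over.pullback g' ≅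
      Over.pullback k ⋙ pushforward (pullback.snd p' p') :=
    Adjunction.rightAdjointUniq
      (((Over.mapPullbackAdj g').comp (adj (pullback.snd p p))).ofNatIsoLeft (bcLeft h2).symm)
      ((adj (pullback.snd p' p')).comp (Over.mapPullbackAdj k))
  let D : (Over.pullback k).obj (Over.mk (pullback.diagonal p)) ≅
      Over.mk (pullback.diagonal p') :=
    Over.isoMk h3.flip.isoPullback.symm (by simp)
  exact ⟨((bcLeft h.flip).app _).symm ≪≫
    (Over.map p').mapIso (R.app _ ≪≫ (pushforward _).mapIso D)⟩
end

section
/- Every Peano natural number object in the category of types is a Lawvere natural number object: if N is a type, o : N, and s : N → N are such that s is injective, o is not in the image of s, and for every predicate P on N with P o and (∀ n, P n → P (s n)) one has P n for all n, then for every type X, every b : X and every u : X → X there exists a unique function f : N → X with f o = b and f (s n) = u (f n) for all n : N. -/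
/-- The graph of the recursively defined function. -/
inductive RecGraph {N : Type*} {X : Type*} (o : N) (s : N → N) (b : X) (u : X → X) :
    N → X → Prop
  | base : RecGraph o s b u o b
  | step (n : N) (x : X) : RecGraph o s b u n x → RecGraph o s b u (s n) (u x)

/-- Every Peano natural number object in the category of types is a Lawvere natural number
object: if `s` is injective, `o` is not in the image of `s`, and induction holds, then for
every `(X, b, u)` there is a unique `f : N → X` with `f o = b` and `f (s n) = u (f n)`. -/
theorem peano_nno_is_lawvere_nno {N : Type*} (o : N) (s : N → N)
    (hs : Function.Injective s)
    (ho : o ∉ Set.range s)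
    (hind : ∀ P : N → Prop, P o → (∀ n, P n → P (s n)) → ∀ n, P n)
    (X : Type*) (b : X) (u : X → X) :
    ∃! f : N → X, f o = b ∧ ∀ n, f (s n) = u (f n) := by
  have hR : ∀ n, ∃! x, RecGraph o s b u n x := by
    apply hind
    · refine ⟨b, RecGraph.base, ?_⟩
      intro y hy
      generalize hm : o = m at hy
      cases hy with
      | base => rfl
      | step n x h => exact absurd ⟨n, hm.symm⟩ ho
    · rintro n ⟨x, hx, hu⟩
      refine ⟨u x, RecGraph.step n x hx, ?_⟩
      intro y hy
      generalize hm : s n = m at hy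
      cases hy with
      | base => exact absurd ⟨n, hm⟩ ho
      | step k z h =>
        have hk := hs hm
        subst hk
        rw [hu z h]
  choose f hf huniq using hR
  refine ⟨f, ⟨(huniq o b RecGraph.base).symm, fun n =>
    (huniq (s n) _ (RecGraph.step n _ (hf n))).symm⟩, ?_⟩
  rintro g ⟨g0, gs⟩
  funext n
  apply huniq
  revert n
  apply hind
  · rw [g0]
    exact RecGraph.base
  · intro n hn
    rw [gs]
    exact RecGraph.step n _ hn
end

section
/- Every Freyd natural number object in the category of types is a Peano natural number object: if N is a type, o : N, and s : N → N are such that the map Unit ⊕ N → N sending the unique point to o and n to s n is a bijection, and the equivalence relation on N generated by the pairs (n, s n) is the total relation, then s is injective, o is not in the image of s, and for every predicate P on N with P o and (∀ n, P n → P (s n)), P holds of every element of N. -/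
/-- Every Freyd natural number object in the category of types is a Peano natural number
object: if `Unit ⊕ N → N`, sending the point to `o` and `n` to `s n`, is a bijection, and the
equivalence relation generated by the pairs `(n, s n)` is total, then `s` is injective, `o` is
not in the image of `s`, and the induction principle holds. -/
theorem freyd_nno_is_peano_nno {N : Type*} (o : N) (s : N → N)
    (h1 : Function.Bijective (Sum.elim (fun _ : Unit => o) s))
    (h2 : ∀ a b : N, Relation.EqvGen (fun n m => m = s n) a b) :
    Function.Injective s ∧ o ∉ Set.range s ∧
      ∀ P : N → Prop, P o → (∀ n, P n → P (s n)) → ∀ n, P n := by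
  have hinj : Function.Injective s := fun a b h =>
    Sum.inr_injective (h1.1 (a₁ := Sum.inr a) (a₂ := Sum.inr b) h)
  have ho : ∀ n, s n ≠ o := fun n h => by
    have := h1.1 (a₁ := Sum.inr n) (a₂ := Sum.inl ()) h
    cases this
  refine ⟨hinj, fun ⟨n, h⟩ => ho n h, fun P h0 hs n => ?_⟩
  have key : ∀ a b, Relation.EqvGen (fun n m => m = s n) a b →
      ((∃ k : ℕ, a = s^[k] o) ↔ (∃ k : ℕ, b = s^[k] o)) := by
    intro a b h
    induction h with
    | rel x y h =>
      subst h
      constructor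
      · rintro ⟨k, rfl⟩
        exact ⟨k + 1, (Function.iterate_succ_apply' s k o).symm⟩
      · rintro ⟨k, hk⟩
        cases k with
        | zero => exact absurd hk (ho x)
        | succ k =>
          rw [Function.iterate_succ_apply'] at hk
          exact ⟨k, hinj hk⟩
    | refl x => exact Iff.rfl
    | symm x y _ ih => exact ih.symm
    | trans x y z _ _ ih1 ih2 => exact ih1.trans ih2
  obtain ⟨k, rfl⟩ := (key o n (h2 o n)).1 ⟨0, rfl⟩
  clear key
  induction k with
  | zero => exact h0
  | succ k ih =>
    rw [Function.iterate_succ_apply']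
    exact hs _ ih
end

section
/- Every Lawvere natural number object in the category of types is a Freyd natural number object: if N is a type, o : N, and s : N → N are such that for every type X, every b : X and every u : X → X there exists a unique function f : N → X with f o = b and f (s n) = u (f n) for all n, then the map Unit ⊕ N → N sending the unique point to o and n to s n is a bijection, and the equivalence relation on N generated by the pairs (n, s n) is the total relation on N. -/
/-- Every Lawvere natural number object in the category of types is a Freyd natural number
object: if for every `(X, b, u)` there is a unique `f : N → X` with `f o = b` and
`f (s n) = u (f n)`, then the map `Unit ⊕ N → N` sending the point to `o` and `n` to `s n` is
a bijection, and the equivalence relation generated by the pairs `(n, s n)` is total. -/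
theorem lawvere_nno_is_freyd_nno {N : Type*} (o : N) (s : N → N)
    (h : ∀ (X : Type*) (b : X) (u : X → X),
      ∃! f : N → X, f o = b ∧ ∀ n, f (s n) = u (f n)) :
    Function.Bijective (Sum.elim (fun _ : Unit => o) s) ∧
      ∀ a b : N, Relation.EqvGen (fun n m => m = s n) a b := by
  classical
  obtain ⟨f', ⟨hf0', hfs'⟩, -⟩ := h (ULift ℕ) ⟨0⟩ (fun k => ⟨k.down + 1⟩)
  obtain ⟨f, hf⟩ : ∃ f : N → ℕ, ∀ n, f n = (f' n).down := ⟨_, fun _ => rfl⟩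
  have hf0 : f o = 0 := by rw [hf, hf0']
  have hfs : ∀ n, f (s n) = f n + 1 := fun n => by rw [hf, hf, hfs']
  have key : ∀ x, x = s^[f x] o := by
    intro x
    by_contra hx
    obtain ⟨k, hk⟩ : ∃ k, k = f x := ⟨_, rfl⟩
    rw [← hk] at hx
    have hu := (h (ULift (ℕ × Prop)) ⟨(0, False)⟩
      (fun p => ⟨(p.down.1 + 1, p.down.1 < k ∧ p.down.2)⟩)).unique
      (y₁ := fun n => ⟨(f n, False)⟩)
      (y₂ := fun n => ⟨(f n, f n ≤ k ∧ s^[k - f n] n ≠ s^[k] o)⟩)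
      ⟨by simp [hf0], fun n => by simp [hfs]⟩
      ⟨by simp [hf0], fun n => by
        simp only [hfs]
        congr 2
        apply propext
        by_cases hlt : f n < k
        · have e : k - f n = (k - (f n + 1)) + 1 := by omega
          rw [e, Function.iterate_succ_apply]
          constructor
          · rintro ⟨-, h2⟩
            exact ⟨hlt, hlt.le, h2⟩
          · rintro ⟨-, -, h2⟩
            exact ⟨hlt, h2⟩
        · constructor
          · rintro ⟨h1, -⟩
            omega
          · rintro ⟨h1, -⟩
            omega⟩
    have hc := congrArg (fun p => p.down.2) (congrFun hu x)
    simp only [← hk, le_refl, Nat.sub_self, Function.iterate_zero, id, true_and] at hc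
    rw [hc]
    exact hx
  have inj : ∀ a b, f a = f b → a = b := fun a b e => by rw [key a, key b, e]
  refine ⟨⟨?_, ?_⟩, ?_⟩
  · rintro (⟨⟩ | a) (⟨⟩ | b) e
    · rfl
    · have := congrArg f e
      simp [hf0, hfs] at this
    · have := congrArg f e
      simp [hf0, hfs] at this
    · have := congrArg f e
      simp [hfs] at this
      rw [inj a b this]
  · intro y
    rcases hy : f y with _ | k
    · exact ⟨Sum.inl (), inj _ _ (by simp [hf0, hy])⟩
    · refine ⟨Sum.inr (s^[k] o), ?_⟩
      rw [key y, hy, Function.iterate_succ_apply']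
      rfl
  · have ho : ∀ k, Relation.EqvGen (fun n m => m = s n) o (s^[k] o) := by
      intro k
      induction k with
      | zero => exact .refl _
      | succ k ih =>
        rw [Function.iterate_succ_apply']
        exact .trans _ _ _ ih (.rel _ _ rfl)
    intro a b
    rw [key a, key b]
    exact .trans _ _ _ (.symm _ _ (ho _)) (ho _)
end
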